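/- Z is completely representable: there exist a set U and a function rep : S → 𝒫(U × U) such that (a) the sets rep(a) for a ∈ S are nonempty, pairwise disjoint, and their union is U × U; (b) for a ∈ S: a ∈ I iff rep(a) ⊆ id_U iff rep(a) ∩ id_U ≠ ∅; (c) for a, b ∈ S: C(a,b) iff rep(b) = rep(a)⁻¹ iff rep(b) ∩ rep(a)⁻¹ ≠ ∅; (d) for a, b, c ∈ S: P(a,b,c) iff rep(c) ⊆ rep(a) ∘ rep(b) iff rep(c) ∩ (rep(a) ∘ rep(b)) ≠ ∅, where ∘ is relation composition, ⁻¹ is relation converse, and id_U = {(u,u) : u ∈ U}. -/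

import Mathlib

open FirstOrder FirstOrder.Language

/-- Relation symbols of the language of atom structures: a unary `I`,
a binary `C` and a ternary `P`. -/
inductive AtomRel : ℕ → Type
  | I : AtomRel 1
  | C : AtomRel 2
  | P : AtomRel 3

/-- The first-order language with one ternary relation symbol `P`, one binary
relation symbol `C` and one unary relation symbol `I`. -/
def atomLang : FirstOrder.Language :=
  ⟨fun _ => Empty, AtomRel⟩

/-- Function symbols of the language of the term algebras: a constant `1'`,
unary symbols `−` (complement) and `⁻` (converse), binary symbols `+` and `;`. -/
inductive AlgFun : ℕ → Type
  | one : AlgFun 0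
  | compl : AlgFun 1
  | conv : AlgFun 1
  | add : AlgFun 2
  | comp : AlgFun 2

/-- The first-order language with binary operations `+` and `;`, unary
operations `−` and `⁻`, and a constant `1'`. -/
def algLang : FirstOrder.Language :=
  ⟨AlgFun, fun _ => Empty⟩

section Generic

variable {M : Type} [atomLang.Structure M]

/-- The interpretation of the unary relation symbol `I`. -/
def mI (a : M) : Prop := Structure.RelMap (L := atomLang) (AtomRel.I : atomLang.Relations 1) ![a]

/-- The interpretation of the binary relation symbol `C`. -/
def mC (a b : M) : Prop := Structure.RelMap (L := atomLang) (AtomRel.C : atomLang.Relations 2) ![a, b]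

/-- The interpretation of the ternary relation symbol `P`. -/
def mP (a b c : M) : Prop := Structure.RelMap (L := atomLang) (AtomRel.P : atomLang.Relations 3) ![a, b, c]

/-- `X ; Y = {u : ∃ x ∈ X, y ∈ Y, P(x,y,u)}`. -/
def sComp (X Y : Set M) : Set M := {u | ∃ x ∈ X, ∃ y ∈ Y, mP x y u}

/-- `X⁻ = {u : ∃ x ∈ X, C(x,u)}`. -/
def sConv (X : Set M) : Set M := {u | ∃ x ∈ X, mC x u}

/-- The set of elements satisfying `I`. -/
def idSet (M : Type) [atomLang.Structure M] : Set M := {a | mI a}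

end Generic

/-- Membership in the term algebra: the smallest collection of subsets of `M`
containing all singletons and the set `I`, closed under binary union,
complementation, `;` and `⁻`. -/
inductive InTA (M : Type) [atomLang.Structure M] : Set M → Prop
  | sing (a : M) : InTA M {a}
  | idset : InTA M (idSet M)
  | union {X Y : Set M} : InTA M X → InTA M Y → InTA M (X ∪ Y)
  | compl {X : Set M} : InTA M X → InTA M Xᶜ
  | comp {X Y : Set M} : InTA M X → InTA M Y → InTA M (sComp X Y)
  | conv {X : Set M} : InTA M X → InTA M (sConv X)

/-- The term algebra of an atom structure, as a type. -/
def TermAlg (M : Type) [atomLang.Structure M] : Type := {X : Set M // InTA M X}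

/-- The term algebra as a structure in the language `algLang`:
`+` is union, `−` is complement, `;` and `⁻` are the operations defined from
`P` and `C`, and `1'` is the set `I`. -/
instance termAlgStructure (M : Type) [atomLang.Structure M] :
    algLang.Structure (TermAlg M) where
  funMap := fun {_} f v =>
    match f with
    | .one => ⟨idSet M, InTA.idset⟩
    | .compl => ⟨(v 0).1ᶜ, InTA.compl (v 0).2⟩
    | .conv => ⟨sConv (v 0).1, InTA.conv (v 0).2⟩
    | .add => ⟨(v 0).1 ∪ (v 1).1, InTA.union (v 0).2 (v 1).2⟩
    | .comp => ⟨sComp (v 0).1 (v 1).1, InTA.comp (v 0).2 (v 1).2⟩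
  RelMap := fun {_} r _ => r.elim

/-- `a` goes from `x` to `y` when `P(x,a,a)` and `P(a,y,a)`. -/
def goes {M : Type} [atomLang.Structure M] (a x y : M) : Prop := mP x a a ∧ mP a y a

/-- `X` splits the pair `(x,y)` when some `a ∈ X` and some `b ∉ X` both go
from `x` to `y`. -/
def SplitsG {M : Type} [atomLang.Structure M] (X : Set M) (x y : M) : Prop :=
  ∃ a ∈ X, ∃ b ∉ X, goes a x y ∧ goes b x y

/-- The pair `(x,y)` is splitable when `x ≠ y` and at least two distinct
elements go from `x` to `y`. -/
def SplitableG {M : Type} [atomLang.Structure M] (x y : M) : Prop :=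
  x ≠ y ∧ ∃ a b : M, a ≠ b ∧ goes a x y ∧ goes b x y

/-- Converse of a binary relation, as a set of pairs. -/
def relConv {U : Type} (R : Set (U × U)) : Set (U × U) := {p | (p.2, p.1) ∈ R}

/-- Composition of binary relations, as sets of pairs. -/
def relComp {U : Type} (R T : Set (U × U)) : Set (U × U) :=
  {p | ∃ w, (p.1, w) ∈ R ∧ (w, p.2) ∈ T}

/-- An atom structure is completely representable. -/
def CompRep (M : Type) [atomLang.Structure M] : Prop :=
  ∃ (U : Type) (rep : M → Set (U × U)),
    (∀ a : M, (rep a).Nonempty) ∧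
    (∀ a b : M, a ≠ b → Disjoint (rep a) (rep b)) ∧
    (⋃ a : M, rep a) = Set.univ ∧
    (∀ a : M, (mI a ↔ rep a ⊆ Set.diagonal U) ∧
      ((rep a ⊆ Set.diagonal U) ↔ (rep a ∩ Set.diagonal U).Nonempty)) ∧
    (∀ a b : M, (mC a b ↔ rep b = relConv (rep a)) ∧
      ((rep b = relConv (rep a)) ↔ (rep b ∩ relConv (rep a)).Nonempty)) ∧
    (∀ a b c : M, (mP a b c ↔ rep c ⊆ relComp (rep a) (rep b)) ∧
      ((rep c ⊆ relComp (rep a) (rep b)) ↔ (rep c ∩ relComp (rep a) (rep b)).Nonempty))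
/-- The atoms of the atom structure `Z`: identity atoms `id n i` (`i ≤ n`),
split atoms `r n k` and their converses `rc n k` (`1 ≤ k ≤ n`), and
atoms `w n i m j` (`i ≤ n`, `j ≤ m`).  Distinct constructor applications give
pairwise distinct elements. -/
inductive Atom : Type
  | id : (n i : ℕ) → i ≤ n → Atom
  | r : (n k : ℕ) → 1 ≤ k → k ≤ n → Atom
  | rc : (n k : ℕ) → 1 ≤ k → k ≤ n → Atom
  | w : (n i m j : ℕ) → i ≤ n → j ≤ m → Atom

/-- The domain function of `Z`. -/
def Atom.dom : Atom → Atom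
  | .id n i h => .id n i h
  | .r n _ _ _ => .id n 0 (Nat.zero_le n)
  | .rc n k _ h2 => .id n k h2
  | .w n i _ _ hi _ => .id n i hi

/-- The range function of `Z`. -/
def Atom.rg : Atom → Atom
  | .id n i h => .id n i h
  | .r n k _ h2 => .id n k h2
  | .rc n _ _ _ => .id n 0 (Nat.zero_le n)
  | .w _ _ m j _ hj => .id m j hj

/-- Membership in the set `I` of identity atoms of `Z`. -/
def Atom.isId : Atom → Prop
  | .id _ _ _ => True
  | _ => False

/-- The converse function on atoms of `Z`. -/
def Atom.cnv : Atom → Atom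
  | .id n i h => .id n i h
  | .r n k h1 h2 => .rc n k h1 h2
  | .rc n k h1 h2 => .r n k h1 h2
  | .w n i m j hi hj => .w m j n i hj hi

/-- The binary relation `C` of `Z`: it consists of the pairs `(x,x)` for
`x ∈ I`, `(r n k, rc n k)`, `(rc n k, r n k)` and `(w n i m j, w m j n i)`,
i.e. exactly the pairs `(a, cnv a)`. -/
def Crel (a b : Atom) : Prop := b = Atom.cnv a

/-- The ternary relation `P` of `Z`: the triples `(dom a, a, a)` and
`(a, rg a, a)` for `a ∈ S`, the triples `(a, b, dom a)` for `(a,b) ∈ C`, and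
the triples `(a,b,c)` of non-identity atoms with `dom a = dom c`,
`rg a = dom b`, `rg b = rg c`. -/
def Prel (a b c : Atom) : Prop :=
  (a = b.dom ∧ c = b) ∨
  (b = a.rg ∧ c = a) ∨
  (Crel a b ∧ c = a.dom) ∨
  (¬ a.isId ∧ ¬ b.isId ∧ ¬ c.isId ∧ a.dom = c.dom ∧ a.rg = b.dom ∧ b.rg = c.rg)

/-- `Z` as a structure for the language `atomLang`. -/
instance atomStructureZ : atomLang.Structure Atom where
  funMap := fun {_} f _ => f.elim
  RelMap := fun {_} r v =>
    match r with
    | AtomRel.I => (v 0).isId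
    | AtomRel.C => Crel (v 0) (v 1)
    | AtomRel.P => Prel (v 0) (v 1) (v 2)

/-- `X ⊆ S` splits the pair `(x,y)` if there are `a ∈ X` and `b ∉ X` with
`dom a = dom b = x` and `rg a = rg b = y`. -/
def Splits (X : Set Atom) (x y : Atom) : Prop :=
  ∃ a ∈ X, ∃ b ∉ X, a.dom = x ∧ a.rg = y ∧ b.dom = x ∧ b.rg = y

/-- The pair `(x,y)` is splitable if `x ≠ y` and there are two distinct
elements `a ≠ b` of `S` with `dom a = dom b = x` and `rg a = rg b = y`. -/
def Splitable (x y : Atom) : Prop :=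
  x ≠ y ∧ ∃ a b : Atom, a ≠ b ∧ a.dom = x ∧ a.rg = y ∧ b.dom = x ∧ b.rg = y

/-!
In `Z` every triangle of non-identity atoms whose endpoints match is consistent, so a representation
can be built without ever checking triangles: it is enough to label the pairs of points by atoms,
compatibly with endpoints and converse, so that whenever `P a b c` asks for a point witnessing a
composition, such a point exists. Points are taken to be formal terms: besides base points there is,
for all points `u`, `v` and atoms `a`, `b`, a point `witness u v a b` created in order to receive
`a` from `u` and `b` from `v`. A term is never a subterm of itself, so the requests of a point do
not interfere with those of the points it was created from, and the remaining pairs of distinct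
points may carry any non-identity atom with the right endpoints.
-/

/-- An atom structure whose atoms are arrows between identity atoms, all of whose non-identity atoms
are flexible (every triangle of them with matching endpoints is consistent), and in which any two
identity atoms are joined by a non-identity atom. -/
class FlexibleAtomStructure (M : Type) [atomLang.Structure M] where
  dom : M → M
  rg : M → M
  cnv : M → M
  mC_iff (a b : M) : mC a b ↔ b = cnv a
  mP_iff (a b c : M) : mP a b c ↔
    (a = dom b ∧ c = b) ∨ (b = rg a ∧ c = a) ∨ (mC a b ∧ c = dom a) ∨
      (¬ mI a ∧ ¬ mI b ∧ ¬ mI c ∧ dom a = dom c ∧ rg a = dom b ∧ rg b = rg c)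
  mI_dom (a : M) : mI (dom a)
  dom_of_mI {a : M} : mI a → dom a = a
  cnv_of_mI {a : M} : mI a → cnv a = a
  cnv_cnv (a : M) : cnv (cnv a) = a
  dom_cnv (a : M) : dom (cnv a) = rg a
  exists_not_mI_between {x y : M} : mI x → mI y → ∃ a, ¬ mI a ∧ dom a = x ∧ rg a = y

theorem fiber_subset_iff_and_iff_inter_nonempty {X M : Type*} {f : X → M} (hf : f.Surjective)
    {s : Set X} {p : M → Prop} (hs : ∀ x, x ∈ s ↔ p (f x)) (a : M) :
    (p a ↔ f ⁻¹' {a} ⊆ s) ∧ (f ⁻¹' {a} ⊆ s ↔ (f ⁻¹' {a} ∩ s).Nonempty) := by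
  have subset_of_p : p a → f ⁻¹' {a} ⊆ s := by
    rintro ha x rfl
    exact (hs x).2 ha
  have nonempty_of_subset (h : f ⁻¹' {a} ⊆ s) : (f ⁻¹' {a} ∩ s).Nonempty :=
    let ⟨x, hx⟩ := hf a
    ⟨x, hx, h hx⟩
  have p_of_nonempty : (f ⁻¹' {a} ∩ s).Nonempty → p a := by
    rintro ⟨x, rfl, hx⟩
    exact (hs x).1 hx
  exact ⟨⟨subset_of_p, p_of_nonempty ∘ nonempty_of_subset⟩,
    ⟨nonempty_of_subset, subset_of_p ∘ p_of_nonempty⟩⟩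

theorem exists_symmetric_selection {V M : Type*} {cnv : M → M} (hcnv : cnv.Involutive)
    {A : V → V → M → Prop} (hA : ∀ u v a, A u v a → A v u (cnv a))
    (hex : ∀ u v, ∃ a, A u v a ∧ (u = v → cnv a = a)) :
    ∃ N : V → V → M, ∀ u v, A u v (N u v) ∧ N v u = cnv (N u v) := by
  classical
  choose f hf hdiag using hex
  refine ⟨fun u v => if WellOrderingRel u v then f u v else cnv (f v u), fun u v => ⟨?_, ?_⟩⟩
  · dsimp only
    split_ifs
    exacts [hf u v, hA _ _ _ (hf v u)]
  · rcases trichotomous_of WellOrderingRel u v with h | rfl | h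
    · simp [h, asymm h]
    · simp [irrefl, hdiag]
    · simp [h, asymm h, hcnv _]

theorem compRep_of_labelling {M U : Type} [atomLang.Structure M] (N : U → U → M)
    (exists_eq : ∀ a, ∃ u v, N u v = a)
    (mI_iff : ∀ u v, mI (N u v) ↔ u = v)
    (mC_iff : ∀ u v a, mC (N u v) a ↔ N v u = a)
    (mP_iff : ∀ u v a b, mP a b (N u v) ↔ ∃ w, N u w = a ∧ N w v = b) :
    CompRep M := by
  let rep (a : M) : Set (U × U) := (fun p => N p.1 p.2) ⁻¹' {a}
  have surj : (fun p : U × U => N p.1 p.2).Surjective := fun a =>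
    let ⟨u, v, h⟩ := exists_eq a
    ⟨(u, v), h⟩
  have swap_congr {u v x y : U} (h : N u v = N x y) : N v u = N y x :=
    (mC_iff u v _).1 (h ▸ (mC_iff x y _).2 rfl)
  have mem_relConv_iff (a : M) (p : U × U) : p ∈ relConv (rep a) ↔ mC a (N p.1 p.2) := by
    obtain ⟨x, y, rfl⟩ := exists_eq a
    rw [mC_iff]
    exact ⟨fun h => (swap_congr h).symm, fun h => (swap_congr h).symm⟩
  have rep_eq_iff (a b : M) : rep b = relConv (rep a) ↔ rep b ⊆ relConv (rep a) := by
    refine ⟨fun h => h.subset, fun h => h.antisymm ?_⟩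
    rintro ⟨u, v⟩ (hvu : N v u = a)
    obtain ⟨x, y, rfl⟩ := exists_eq b
    have hyx : N y x = a := h (rfl : (x, y) ∈ rep (N x y))
    exact swap_congr (hvu.trans hyx.symm)
  refine ⟨U, rep, surj, fun a b hab => (Set.disjoint_singleton.2 hab).preimage _,
    Set.iUnion_eq_univ_iff.2 fun p => ⟨_, rfl⟩, ?_, fun a b => ?_, fun a b => ?_⟩
  · exact fiber_subset_iff_and_iff_inter_nonempty surj fun p => (mI_iff p.1 p.2).symm
  · rw [rep_eq_iff]
    exact fiber_subset_iff_and_iff_inter_nonempty surj (mem_relConv_iff a) b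
  · exact fiber_subset_iff_and_iff_inter_nonempty surj fun p => (mP_iff p.1 p.2 a b).symm

namespace FlexibleAtomStructure

variable {M : Type} [atomLang.Structure M] [FlexibleAtomStructure M]

theorem rg_cnv (a : M) : rg (cnv a) = dom a := by rw [← dom_cnv, cnv_cnv]

theorem mI_rg (a : M) : mI (rg a) := dom_cnv a ▸ mI_dom _

theorem rg_of_mI {a : M} (ha : mI a) : rg a = a := by rw [← dom_cnv, cnv_of_mI ha, dom_of_mI ha]

theorem mI_cnv_iff {a : M} : mI (cnv a) ↔ mI a := by
  refine ⟨fun h => ?_, fun h => (cnv_of_mI h).symm ▸ h⟩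
  rwa [← cnv_of_mI h, cnv_cnv] at h

/-- A labelling of the pairs of points of `U` by atoms, compatible with identities, endpoints and
converse, in which any two points have a common out-neighbour along any prescribed non-identity
atoms. The identity atom sitting at the point `u` is `N u u`. -/
structure IsSaturatedNetwork {U : Type} (N : U → U → M) : Prop where
  mI_iff (u v : U) : mI (N u v) ↔ u = v
  dom_eq (u v : U) : dom (N u v) = N u u
  swap (u v : U) : N v u = cnv (N u v)
  exists_self {x : M} : mI x → ∃ u, N u u = x
  exists_pair {u v : U} {a b : M} : ¬ mI a → ¬ mI b → dom a = N u u → dom b = N v v →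
    rg a = rg b → (u = v → a = b) → ∃ w, N u w = a ∧ N v w = b

namespace IsSaturatedNetwork

variable {U : Type} {N : U → U → M}

theorem rg_eq (hN : IsSaturatedNetwork N) (u v : U) : rg (N u v) = N v v := by
  rw [← dom_cnv, ← hN.swap, hN.dom_eq]

theorem exists_apply_eq (hN : IsSaturatedNetwork N) {u : U} {a : M} (ha : dom a = N u u) :
    ∃ w, N u w = a := by
  by_cases hI : mI a
  · exact ⟨u, by rw [← ha, dom_of_mI hI]⟩
  · obtain ⟨w, hw, -⟩ := hN.exists_pair hI hI ha ha rfl fun _ => rfl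
    exact ⟨w, hw⟩

theorem exists_eq (hN : IsSaturatedNetwork N) (a : M) : ∃ u v, N u v = a := by
  obtain ⟨u, hu⟩ := hN.exists_self (mI_dom a)
  exact ⟨u, hN.exists_apply_eq hu.symm⟩

theorem mP_triangle (hN : IsSaturatedNetwork N) (u v w : U) :
    mP (N u w) (N w v) (N u v) := by
  rw [mP_iff]
  by_cases huw : u = w
  · subst huw
    exact .inl ⟨(hN.dom_eq u v).symm, rfl⟩
  by_cases hwv : w = v
  · subst hwv
    exact .inr (.inl ⟨(hN.rg_eq u w).symm, rfl⟩)
  by_cases huv : u = v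
  · subst huv
    exact .inr (.inr (.inl ⟨(mC_iff _ _).2 (hN.swap u w), (hN.dom_eq u w).symm⟩))
  · simp only [hN.mI_iff, hN.dom_eq, hN.rg_eq, huw, hwv, huv, not_false_eq_true, and_self, or_true]

theorem exists_of_mP (hN : IsSaturatedNetwork N) {u v : U} {a b : M} (h : mP a b (N u v)) :
    ∃ w, N u w = a ∧ N w v = b := by
  rcases (mP_iff _ _ _).1 h with ⟨ha, hb⟩ | ⟨hb, ha⟩ | ⟨hab, huv⟩ | ⟨ha, hb, huv, hd, hm, hr⟩
  · exact ⟨u, by rw [ha, ← hb, hN.dom_eq], hb⟩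
  · exact ⟨v, ha, by rw [hb, ← ha, hN.rg_eq]⟩
  · obtain rfl : u = v := (hN.mI_iff u v).1 (huv ▸ mI_dom a)
    obtain ⟨w, hw⟩ := hN.exists_apply_eq huv.symm
    exact ⟨w, hw, by rw [hN.swap u w, hw, (mC_iff a b).1 hab]⟩
  · rw [hN.mI_iff] at huv
    rw [hN.dom_eq] at hd
    rw [hN.rg_eq] at hr
    obtain ⟨w, hu, hv⟩ := hN.exists_pair ha (mI_cnv_iff.not.2 hb) hd
      ((dom_cnv b).trans hr) (hm.trans (rg_cnv b).symm) (absurd · huv)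
    exact ⟨w, hu, by rw [hN.swap v w, hv, cnv_cnv]⟩

theorem compRep (hN : IsSaturatedNetwork N) : CompRep M := by
  refine compRep_of_labelling N hN.exists_eq hN.mI_iff (fun u v a => ?_) fun u v a b =>
    ⟨hN.exists_of_mP, ?_⟩
  · rw [mC_iff, hN.swap u v, eq_comm]
  · rintro ⟨w, rfl, rfl⟩
    exact hN.mP_triangle u v w

end IsSaturatedNetwork

/-- Formal points: `base x` sits at the identity atom `dom x`, and `witness u v a b` is a point
created in order to receive the atom `a` from `u` and the atom `b` from `v`. -/
inductive Point (M : Type) : Type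
  | base (x : M)
  | witness (u v : Point M) (a b : M)

namespace Point

/-- The identity atom at which a point sits. For `witness u v a b` this is the common range of `a`
and `b`; when the ranges differ, the request made by `b` is ignored, see `Attached`. -/
def label : Point M → M
  | base x => dom x
  | witness _ _ a _ => rg a

theorem mI_label (u : Point M) : mI u.label := by
  cases u
  exacts [mI_dom _, mI_rg _]

/-- `w.Requests u a` says that the point `w` was created in order to receive the atom `a` from
`u`. -/
def Requests {M : Type} : Point M → Point M → M → Prop
  | base _, _, _ => False
  | witness u v a b, x, c => x = u ∧ c = a ∨ x = v ∧ c = b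

theorem Requests.sizeOf_lt {M : Type} {w u : Point M} {a : M} (h : w.Requests u a) :
    sizeOf u < sizeOf w := by
  cases w with
  | base => exact h.elim
  | witness => rcases h with ⟨rfl, -⟩ | ⟨rfl, -⟩ <;> rw [witness.sizeOf_spec] <;> omega

/-- One of the points `u`, `v` requests the label `a` for the pair `(u, v)`, and the request can be
met: `a` is a non-identity atom from the label of `u` to that of `v`. -/
structure Attached (u v : Point M) (a : M) : Prop where
  not_mI : ¬ mI a
  dom_eq : dom a = u.label
  rg_eq : rg a = v.label
  requests_or : v.Requests u a ∨ u.Requests v (cnv a)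

theorem Attached.ne {u v : Point M} {a : M} (h : Attached u v a) : u ≠ v := by
  rintro rfl
  rcases h.requests_or with h | h <;> exact h.sizeOf_lt.false

theorem Attached.symm {u v : Point M} {a : M} (h : Attached u v a) : Attached v u (cnv a) := by
  refine ⟨mI_cnv_iff.not.2 h.not_mI, (dom_cnv a).trans h.rg_eq, (rg_cnv a).trans h.dom_eq, ?_⟩
  rw [cnv_cnv]
  exact h.requests_or.symm

theorem Attached.requests {u w : Point M} {a : M} (h : Attached u w a)
    (huw : sizeOf u < sizeOf w) : w.Requests u a :=
  h.requests_or.resolve_right fun h => h.sizeOf_lt.not_gt huw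

/-- The conditions on a label `a` of the pair `(u, v)` of points. Only one of several conflicting
requests needs to be met: `witness u u a b` with `a ≠ b` makes two for the same pair. -/
structure Admissible (u v : Point M) (a : M) : Prop where
  dom_eq : dom a = u.label
  rg_eq : rg a = v.label
  mI_iff : mI a ↔ u = v
  attached : (∃ b, Attached u v b) → Attached u v a

theorem Admissible.symm {u v : Point M} {a : M} (h : Admissible u v a) :
    Admissible v u (cnv a) := by
  refine ⟨(dom_cnv a).trans h.rg_eq, (rg_cnv a).trans h.dom_eq,
    mI_cnv_iff.trans (h.mI_iff.trans eq_comm), ?_⟩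
  rintro ⟨b, hb⟩
  exact (h.attached ⟨_, hb.symm⟩).symm

theorem exists_admissible (u v : Point M) : ∃ a, Admissible u v a := by
  by_cases h : ∃ a, Attached u v a
  · obtain ⟨a, ha⟩ := h
    exact ⟨a, ha.dom_eq, ha.rg_eq, iff_of_false ha.not_mI ha.ne, fun _ => ha⟩
  by_cases huv : u = v
  · subst huv
    exact ⟨u.label, dom_of_mI u.mI_label, rg_of_mI u.mI_label, iff_of_true u.mI_label rfl,
      (absurd · h)⟩
  · obtain ⟨a, hI, hd, hr⟩ := exists_not_mI_between u.mI_label v.mI_label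
    exact ⟨a, hd, hr, iff_of_false hI huv, (absurd · h)⟩

theorem exists_admissible_labelling :
    ∃ N : Point M → Point M → M, ∀ u v, Admissible u v (N u v) ∧ N v u = cnv (N u v) := by
  refine exists_symmetric_selection cnv_cnv (fun _ _ _ h => h.symm) fun u v => ?_
  obtain ⟨a, ha⟩ := exists_admissible u v
  exact ⟨a, ha, fun huv => cnv_of_mI (ha.mI_iff.2 huv)⟩

theorem Admissible.eq_label {u : Point M} {a : M} (h : Admissible u u a) : a = u.label := by
  rw [← dom_of_mI (h.mI_iff.2 rfl), h.dom_eq]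

theorem Admissible.requests {u w : Point M} {a c : M} (h : Admissible u w c) (hI : ¬ mI a)
    (hd : dom a = u.label) (hr : rg a = w.label) (ha : w.Requests u a) : w.Requests u c :=
  (h.attached ⟨a, hI, hd, hr, .inl ha⟩).requests ha.sizeOf_lt

theorem isSaturatedNetwork {N : Point M → Point M → M} (hN : ∀ u v, Admissible u v (N u v))
    (swap : ∀ u v, N v u = cnv (N u v)) : IsSaturatedNetwork N where
  mI_iff u v := (hN u v).mI_iff
  dom_eq u v := (hN u v).dom_eq.trans (hN u u).eq_label.symm
  swap := swap
  exists_self {x} hx := ⟨base x, (hN _ _).eq_label.trans (dom_of_mI hx)⟩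
  exists_pair {u v a b} ha hb hau hbv hab huv := by
    rw [(hN _ _).eq_label] at hau hbv
    have hu := (hN u (witness u v a b)).requests ha hau rfl (.inl ⟨rfl, rfl⟩)
    have hv := (hN v (witness u v a b)).requests hb hbv hab.symm (.inr ⟨rfl, rfl⟩)
    refine ⟨witness u v a b, ?_, ?_⟩
    · rcases hu with ⟨-, h⟩ | ⟨h', h⟩
      exacts [h, h.trans (huv h').symm]
    · rcases hv with ⟨h', h⟩ | ⟨-, h⟩
      exacts [h.trans (huv h'.symm), h]

end Point

end FlexibleAtomStructure

open FlexibleAtomStructure in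
theorem stmt_6_general (M : Type) [atomLang.Structure M] [FlexibleAtomStructure M] : CompRep M := by
  obtain ⟨N, hN⟩ := Point.exists_admissible_labelling (M := M)
  exact (Point.isSaturatedNetwork (fun u v => (hN u v).1) fun u v => (hN u v).2).compRep

theorem Atom.isId.exists_eq_id {x : Atom} (hx : x.isId) : ∃ n i h, x = .id n i h := by
  cases x with
  | id n i h => exact ⟨n, i, h, rfl⟩
  | _ => exact hx.elim

instance : FlexibleAtomStructure Atom where
  dom := Atom.dom
  rg := Atom.rg
  cnv := Atom.cnv
  mC_iff _ _ := .rfl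
  mP_iff _ _ _ := .rfl
  mI_dom a := by cases a <;> trivial
  dom_of_mI ha := by
    obtain ⟨n, i, h, rfl⟩ := Atom.isId.exists_eq_id ha
    rfl
  cnv_of_mI ha := by
    obtain ⟨n, i, h, rfl⟩ := Atom.isId.exists_eq_id ha
    rfl
  cnv_cnv a := by cases a <;> rfl
  dom_cnv a := by cases a <;> rfl
  exists_not_mI_between hx hy := by
    obtain ⟨n, i, hi, rfl⟩ := Atom.isId.exists_eq_id hx
    obtain ⟨m, j, hj, rfl⟩ := Atom.isId.exists_eq_id hy
    exact ⟨.w n i m j hi hj, id, rfl, rfl⟩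

/-- `Z` is completely representable. -/
theorem stmt_6 :
    ∃ (U : Type) (rep : Atom → Set (U × U)),
      (∀ a : Atom, (rep a).Nonempty) ∧
      (∀ a b : Atom, a ≠ b → Disjoint (rep a) (rep b)) ∧
      (⋃ a : Atom, rep a) = Set.univ ∧
      (∀ a : Atom, (a.isId ↔ rep a ⊆ Set.diagonal U) ∧
        ((rep a ⊆ Set.diagonal U) ↔ (rep a ∩ Set.diagonal U).Nonempty)) ∧
      (∀ a b : Atom, (Crel a b ↔ rep b = relConv (rep a)) ∧
        ((rep b = relConv (rep a)) ↔ (rep b ∩ relConv (rep a)).Nonempty)) ∧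
      (∀ a b c : Atom, (Prel a b c ↔ rep c ⊆ relComp (rep a) (rep b)) ∧
        ((rep c ⊆ relComp (rep a) (rep b)) ↔
          (rep c ∩ relComp (rep a) (rep b)).Nonempty)) :=
  stmt_6_general Atom
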